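/- Define the V₁×V₂ real matrix Q by Q_{ij} = q²_{ij} − 2q¹_{ij} + q⁰_{ij} for (i,j)∈E and Q_{ij}=0 otherwise, a_i = c_i + ∑_{j:(i,j)∈E}(q¹_{ij} − q⁰_{ij}) for i∈V₁, and b_j = d_j + ∑_{i:(i,j)∈E}(q¹_{ij} − q⁰_{ij}) for j∈V₂. Then for all U₁ ⊆ V₁ and U₂ ⊆ V₂, f(U₁,U₂) = φ(U₁,U₂) + ∑_{(i,j)∈E} q⁰_{ij}; consequently (U₁,U₂) minimizes the bipartite GVC objective f if and only if it minimizes the BQP01 objective φ. -/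

import Mathlib

open Finset

variable {V1 : Type*} {V2 : Type*} [Fintype V1] [Fintype V2] [DecidableEq V1] [DecidableEq V2]

/-- Edges of the bipartite edge set `E` with no endpoint selected. -/
def bE0 (E : Finset (V1 × V2)) (U1 : Finset V1) (U2 : Finset V2) : Finset (V1 × V2) :=
  E.filter fun e => e.1 ∉ U1 ∧ e.2 ∉ U2

/-- Edges of `E` with exactly one endpoint selected. -/
def bE1 (E : Finset (V1 × V2)) (U1 : Finset V1) (U2 : Finset V2) : Finset (V1 × V2) :=
  E.filter fun e => (e.1 ∈ U1 ∧ e.2 ∉ U2) ∨ (e.1 ∉ U1 ∧ e.2 ∈ U2)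

/-- Edges of `E` with both endpoints selected. -/
def bE2 (E : Finset (V1 × V2)) (U1 : Finset V1) (U2 : Finset V2) : Finset (V1 × V2) :=
  E.filter fun e => e.1 ∈ U1 ∧ e.2 ∈ U2

/-- The BQP01 objective with matrix `Q` and linear terms `a`, `b`. -/
def bqpObj (Q : V1 → V2 → ℝ) (a : V1 → ℝ) (b : V2 → ℝ)
    (U1 : Finset V1) (U2 : Finset V2) : ℝ :=
  ∑ i ∈ U1, ∑ j ∈ U2, Q i j + ∑ i ∈ U1, a i + ∑ j ∈ U2, b j

/-!
Write `w = q¹ - q⁰`. Since `E₀`, `E₁`, `E₂` partition `E`, the edge cost is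
`∑_E q⁰ + ∑_{E₁} w + ∑_{E₂} (q² - q⁰)`. Summing `w` over the edges at each selected vertex
counts an edge of `E₁` once and an edge of `E₂` twice, so `∑_{E₁} w` equals these vertex sums
minus `2 ∑_{E₂} w`. The vertex sums go into the linear terms, and `q² - q⁰ - 2w = q² - 2q¹ + q⁰`
is left on `E₂`, the edges of `E` inside `U₁ × U₂`.
-/

section

variable {α β M : Type*} [DecidableEq α] [DecidableEq β]

/-- The bipartite generalized vertex cover (GVC) objective on the edge set `E`, for data in an
additive commutative monoid: `c` and `d` are the costs of the selected vertices on the two sides,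
and `qₖ e` is the cost of an edge `e` with exactly `k` selected endpoints. -/
def gvcObj [AddCommMonoid M] (E : Finset (α × β)) (c : α → M) (d : β → M) (q0 q1 q2 : α × β → M)
    (U : Finset α) (W : Finset β) : M :=
  ∑ i ∈ U, c i + ∑ j ∈ W, d j + ∑ e ∈ bE0 E U W, q0 e + ∑ e ∈ bE1 E U W, q1 e +
    ∑ e ∈ bE2 E U W, q2 e

/-- The BQP01 objective for data in an additive commutative monoid; for `M = ℝ` it unfolds to
the same expression as `bqpObj`. -/
def bqp01Obj [AddCommMonoid M] (Q : α → β → M) (a : α → M) (b : β → M)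
    (U : Finset α) (W : Finset β) : M :=
  ∑ i ∈ U, ∑ j ∈ W, Q i j + ∑ i ∈ U, a i + ∑ j ∈ W, b j

theorem sum_sum_eq_sum_bE2 [AddCommMonoid M] {E : Finset (α × β)} {Q : α → β → M}
    (hQ : ∀ i j, (i, j) ∉ E → Q i j = 0) (U : Finset α) (W : Finset β) :
    ∑ i ∈ U, ∑ j ∈ W, Q i j = ∑ e ∈ bE2 E U W, Q e.1 e.2 := by
  have h_subset : bE2 E U W ⊆ U ×ˢ W := fun e he =>
    mem_product.mpr (mem_filter.mp he).2
  rw [← sum_product']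
  refine (sum_subset h_subset fun e he h_notMem => hQ e.1 e.2 fun heE => ?_).symm
  exact h_notMem (mem_filter.mpr ⟨heE, mem_product.mp he⟩)

theorem sum_bE0_add_sum_bE1_add_sum_bE2 [AddCommMonoid M] (E : Finset (α × β)) (w : α × β → M)
    (U : Finset α) (W : Finset β) :
    ∑ e ∈ bE0 E U W, w e + ∑ e ∈ bE1 E U W, w e + ∑ e ∈ bE2 E U W, w e = ∑ e ∈ E, w e := by
  simp only [bE0, bE1, bE2, sum_filter, ← sum_add_distrib]
  refine sum_congr rfl fun e _ => ?_
  by_cases hU : e.1 ∈ U <;> by_cases hW : e.2 ∈ W <;> simp [hU, hW]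

theorem sum_fst_mem_add_sum_snd_mem [AddCommMonoid M] (E : Finset (α × β)) (w : α × β → M)
    (U : Finset α) (W : Finset β) :
    ∑ e ∈ E with e.1 ∈ U, w e + ∑ e ∈ E with e.2 ∈ W, w e =
      ∑ e ∈ bE1 E U W, w e + 2 • ∑ e ∈ bE2 E U W, w e := by
  simp only [bE1, bE2, sum_filter, smul_sum, ← sum_add_distrib]
  refine sum_congr rfl fun e _ => ?_
  by_cases hU : e.1 ∈ U <;> by_cases hW : e.2 ∈ W <;> simp [hU, hW, two_nsmul]

theorem sum_bE0_add_sum_bE1_add_sum_bE2_eq_sum_bE2_add [AddCommGroup M] (E : Finset (α × β))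
    (q0 q1 q2 : α × β → M) (U : Finset α) (W : Finset β) :
    ∑ e ∈ bE0 E U W, q0 e + ∑ e ∈ bE1 E U W, q1 e + ∑ e ∈ bE2 E U W, q2 e =
      ∑ e ∈ bE2 E U W, (q2 e - 2 • q1 e + q0 e) +
        (∑ e ∈ E with e.1 ∈ U, (q1 e - q0 e) + ∑ e ∈ E with e.2 ∈ W, (q1 e - q0 e)) +
        ∑ e ∈ E, q0 e := by
  rw [sum_fst_mem_add_sum_snd_mem, ← sum_bE0_add_sum_bE1_add_sum_bE2 E q0 U W]
  simp only [sum_add_distrib, sum_sub_distrib, ← smul_sum]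
  abel

theorem gvcObj_eq_bqp01Obj_add [AddCommGroup M] {E : Finset (α × β)} {c : α → M} {d : β → M}
    {q0 q1 q2 : α × β → M} {Q : α → β → M} {a : α → M} {b : β → M}
    (hQedge : ∀ e ∈ E, Q e.1 e.2 = q2 e - 2 • q1 e + q0 e)
    (hQzero : ∀ i j, (i, j) ∉ E → Q i j = 0)
    (ha : ∀ i, a i = c i + ∑ e ∈ E with e.1 = i, (q1 e - q0 e))
    (hb : ∀ j, b j = d j + ∑ e ∈ E with e.2 = j, (q1 e - q0 e))
    (U : Finset α) (W : Finset β) :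
    gvcObj E c d q0 q1 q2 U W = bqp01Obj Q a b U W + ∑ e ∈ E, q0 e := by
  have h_quad : ∑ i ∈ U, ∑ j ∈ W, Q i j = ∑ e ∈ bE2 E U W, (q2 e - 2 • q1 e + q0 e) :=
    (sum_sum_eq_sum_bE2 hQzero U W).trans
      (sum_congr rfl fun e he => hQedge e (mem_filter.mp he).1)
  have h_left : ∑ i ∈ U, a i = ∑ i ∈ U, c i + ∑ e ∈ E with e.1 ∈ U, (q1 e - q0 e) := by
    simp only [ha, sum_add_distrib, sum_fiberwise_eq_sum_filter]
  have h_right : ∑ j ∈ W, b j = ∑ j ∈ W, d j + ∑ e ∈ E with e.2 ∈ W, (q1 e - q0 e) := by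
    simp only [hb, sum_add_distrib, sum_fiberwise_eq_sum_filter]
  calc gvcObj E c d q0 q1 q2 U W
      = ∑ i ∈ U, c i + ∑ j ∈ W, d j +
          (∑ e ∈ bE0 E U W, q0 e + ∑ e ∈ bE1 E U W, q1 e + ∑ e ∈ bE2 E U W, q2 e) := by
        simp only [gvcObj, add_assoc]
    _ = bqp01Obj Q a b U W + ∑ e ∈ E, q0 e := by
        rw [sum_bE0_add_sum_bE1_add_sum_bE2_eq_sum_bE2_add, bqp01Obj, h_quad, h_left, h_right]
        abel

theorem bipartite_gvc_eq_bqp01_general [AddCommGroup M] [Preorder M] [IsOrderedAddMonoid M]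
    {E : Finset (α × β)} {c : α → M} {d : β → M} {q0 q1 q2 : α × β → M}
    {Q : α → β → M} {a : α → M} {b : β → M}
    (hQedge : ∀ e ∈ E, Q e.1 e.2 = q2 e - 2 • q1 e + q0 e)
    (hQzero : ∀ i j, (i, j) ∉ E → Q i j = 0)
    (ha : ∀ i, a i = c i + ∑ e ∈ E with e.1 = i, (q1 e - q0 e))
    (hb : ∀ j, b j = d j + ∑ e ∈ E with e.2 = j, (q1 e - q0 e)) :
    (∀ (U : Finset α) (W : Finset β),
        gvcObj E c d q0 q1 q2 U W = bqp01Obj Q a b U W + ∑ e ∈ E, q0 e) ∧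
    (∀ (U : Finset α) (W : Finset β),
        (∀ (U' : Finset α) (W' : Finset β),
            gvcObj E c d q0 q1 q2 U W ≤ gvcObj E c d q0 q1 q2 U' W') ↔
          (∀ (U' : Finset α) (W' : Finset β), bqp01Obj Q a b U W ≤ bqp01Obj Q a b U' W')) := by
  have h_obj := gvcObj_eq_bqp01Obj_add hQedge hQzero ha hb
  exact ⟨h_obj, fun U W => by simp only [h_obj, add_le_add_iff_right]⟩

end

/-- bipartite GVC as a BQP01. -/
theorem bipartite_gvc_eq_bqp01
    (E : Finset (V1 × V2))
    (c : V1 → ℝ) (d : V2 → ℝ) (q0 q1 q2 : V1 × V2 → ℝ)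
    (Q : V1 → V2 → ℝ)
    (hQedge : ∀ e ∈ E, Q e.1 e.2 = q2 e - 2 * q1 e + q0 e)
    (hQzero : ∀ i j, (i, j) ∉ E → Q i j = 0)
    (a : V1 → ℝ)
    (ha : ∀ i, a i = c i + ∑ e ∈ E.filter (fun e => e.1 = i), (q1 e - q0 e))
    (b : V2 → ℝ)
    (hb : ∀ j, b j = d j + ∑ e ∈ E.filter (fun e => e.2 = j), (q1 e - q0 e))
    (f : Finset V1 → Finset V2 → ℝ)
    (hf : ∀ (U1 : Finset V1) (U2 : Finset V2),
        f U1 U2 = ∑ i ∈ U1, c i + ∑ j ∈ U2, d j + ∑ e ∈ bE0 E U1 U2, q0 e +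
          ∑ e ∈ bE1 E U1 U2, q1 e + ∑ e ∈ bE2 E U1 U2, q2 e) :
    (∀ (U1 : Finset V1) (U2 : Finset V2),
        f U1 U2 = bqpObj Q a b U1 U2 + ∑ e ∈ E, q0 e) ∧
    (∀ (U1 : Finset V1) (U2 : Finset V2),
        (∀ (W1 : Finset V1) (W2 : Finset V2), f U1 U2 ≤ f W1 W2) ↔
          (∀ (W1 : Finset V1) (W2 : Finset V2),
            bqpObj Q a b U1 U2 ≤ bqpObj Q a b W1 W2)) := by
  obtain rfl : f = gvcObj E c d q0 q1 q2 := funext₂ hf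
  exact bipartite_gvc_eq_bqp01_general (by simpa [two_mul, two_nsmul] using hQedge) hQzero ha hb
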